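/- Let n ≥ 1 and let a x : Fin n → ℝ satisfy |a j * x i| < 1 for all i, j. Then the family indexed by strictly decreasing tuples k : Fin n → ℕ with every value k l ≥ 1, with term (-1)^n · (∏_{l} (1 / (k l : ℝ))) · D(a, k) · D(x, k), has sum equal to the determinant of the n×n matrix with (i,j) entry Real.log (1 - a j * x i). (Determinant form of the logarithm example, from Theorem 1 with g(x) = ln(1−x), whose k-th Maclaurin coefficient is −1/k for k ≥ 1 and 0 for k = 0.) -/

import Mathlib

/-!
The determinant of `A * B`, for `A` of size `n × ι` and `B` of size `ι × n` with `ι` infinite,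
expands by multilinearity into a series over all tuples `k : Fin n → ι`. Tuples with a repeated
value contribute a vanishing minor of `A`. An injective tuple is, in exactly one way, a permutation
of a strictly decreasing one, and summing over the permutations rebuilds the minor of `B`: this is
the Cauchy–Binet formula. If `g y = ∑ c m * y ^ m`, then the matrix of `g (a j * x i)` is such a
product, of the matrices with entries `c m * x i ^ m` and `a j ^ m`.
-/

open Equiv Finset Function Matrix

section ProductOfSeries

variable {R : Type*} [NormedCommRing R]

theorem summable_norm_prod_pi_fin {n : ℕ} {κ : Fin n → Type*} {f : ∀ i, κ i → R}
    (hf : ∀ i, Summable fun k => ‖f i k‖) :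
    Summable fun k : ∀ i, κ i => ‖∏ i, f i (k i)‖ := by
  induction n with
  | zero => exact .of_finite
  | succ n ih =>
    rw [← (Fin.consEquiv κ).summable_iff]
    refine ((hf 0).mul_norm (ih fun i => hf i.succ)).congr fun p => ?_
    simp [Fin.prod_univ_succ, Fin.consEquiv]

variable [CompleteSpace R]

theorem hasSum_prod_pi_fin {n : ℕ} {κ : Fin n → Type*} {f : ∀ i, κ i → R} {s : Fin n → R}
    (hf : ∀ i, HasSum (f i) (s i)) (hf_norm : ∀ i, Summable fun k => ‖f i k‖) :
    HasSum (fun k : ∀ i, κ i => ∏ i, f i (k i)) (∏ i, s i) := by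
  induction n with
  | zero => simp
  | succ n ih =>
    have htail := ih (fun i => hf i.succ) fun i => hf_norm i.succ
    have htail_norm := summable_norm_prod_pi_fin fun i => hf_norm i.succ
    have hmul_summable := summable_mul_of_summable_norm (hf_norm 0) htail_norm
    have hmul := (hf 0).mul htail hmul_summable
    rw [← (Fin.consEquiv κ).hasSum_iff, Fin.prod_univ_succ]
    refine hmul.congr_fun fun p => ?_
    simp [Fin.prod_univ_succ, Fin.consEquiv]

theorem hasSum_prod_pi {ι : Type*} [Fintype ι] {κ : ι → Type*} {f : ∀ i, κ i → R} {s : ι → R}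
    (hf : ∀ i, HasSum (f i) (s i)) (hf_norm : ∀ i, Summable fun k => ‖f i k‖) :
    HasSum (fun k : ∀ i, κ i => ∏ i, f i (k i)) (∏ i, s i) := by
  let e := (Fintype.equivFin ι).symm
  rw [← (e.piCongrLeft κ).hasSum_iff, ← e.prod_comp]
  refine (hasSum_prod_pi_fin (fun i => hf (e i)) fun i => hf_norm (e i)).congr_fun fun k => ?_
  simp [← e.prod_comp]

end ProductOfSeries

section Sorting

variable {n : ℕ} {ι : Type*}

theorem exists_strictAnti_comp_perm_eq [LinearOrder ι] {k : Fin n → ι} (hk : Injective k) :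
    ∃ (m : Fin n → ι) (τ : Perm (Fin n)), StrictAnti m ∧ m ∘ τ = k := by
  let σ := Tuple.sort (OrderDual.toDual ∘ k)
  have hanti : Antitone (k ∘ σ) := Tuple.monotone_sort (OrderDual.toDual ∘ k)
  refine ⟨k ∘ σ, σ⁻¹, hanti.strictAnti_of_injective (hk.comp σ.injective), ?_⟩
  ext i
  simp

theorem injective_strictAnti_comp_perm [Preorder ι] :
    Injective fun p : {k : Fin n → ι // StrictAnti k} × Perm (Fin n) => p.1.1 ∘ p.2 := by
  rintro ⟨⟨k, hk⟩, τ⟩ ⟨⟨m, hm⟩, ρ⟩ (h : k ∘ τ = m ∘ ρ)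
  have hrange : Set.range k = Set.range m := by
    rw [← τ.surjective.range_comp k, h, ρ.surjective.range_comp m]
  obtain rfl : k = m := (hk.range_inj hm).1 hrange
  obtain rfl : τ = ρ := Equiv.ext fun i => hk.injective (congrFun h i)
  rfl

theorem hasSum_strictAnti_sum_perm [LinearOrder ι] {M : Type*} [AddCommMonoid M]
    [TopologicalSpace M] [ContinuousAdd M] [RegularSpace M] {f : (Fin n → ι) → M} {s : M}
    (hf : HasSum f s) (hf_zero : ∀ k, ¬ Injective k → f k = 0) :
    HasSum (fun k : {k : Fin n → ι // StrictAnti k} => ∑ τ : Perm (Fin n), f (k.1 ∘ τ)) s := by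
  rw [← injective_strictAnti_comp_perm.hasSum_iff] at hf
  · exact hf.prod_fiberwise fun k => hasSum_fintype _
  · intro k hk
    refine hf_zero k fun hinj => ?_
    obtain ⟨m, τ, hm, rfl⟩ := exists_strictAnti_comp_perm_eq hinj
    exact hk ⟨(⟨m, hm⟩, τ), rfl⟩

end Sorting

section CauchyBinet

variable {R : Type*}

theorem det_submatrix_eq_zero_of_not_injective [CommRing R] {m ι : Type*} [Fintype m]
    [DecidableEq m] (A : Matrix m ι R) {k : m → ι} (hk : ¬ Injective k) :
    (A.submatrix id k).det = 0 := by
  obtain ⟨i, j, hij, hne⟩ := not_injective_iff.1 hk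
  exact det_zero_of_column_eq hne fun l => by simp [hij]

theorem sum_perm_det_submatrix_mul_prod [CommRing R] {m ι : Type*} [Fintype m] [DecidableEq m]
    (A : Matrix m ι R) (B : Matrix ι m R) (k : m → ι) :
    ∑ τ : Perm m, (A.submatrix id (k ∘ τ)).det * ∏ i, B (k (τ i)) i =
      (A.submatrix id k).det * (B.submatrix k id).det := by
  rw [det_apply' (B.submatrix k id), mul_sum]
  refine sum_congr rfl fun τ _ => ?_
  have hsign : (A.submatrix id (k ∘ τ)).det = Perm.sign τ * (A.submatrix id k).det :=
    det_permute' τ (A.submatrix id k)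
  simp only [hsign, submatrix_apply, id_eq]
  ring

variable [NormedCommRing R] [CompleteSpace R]

theorem hasSum_det_submatrix_mul_prod {m ι : Type*} [Fintype m] [DecidableEq m]
    {A : Matrix m ι R} {B : Matrix ι m R} {C : Matrix m m R}
    (hC : ∀ i j, HasSum (fun k => A i k * B k j) (C i j))
    (hC_norm : ∀ i j, Summable fun k => ‖A i k * B k j‖) :
    HasSum (fun k : m → ι => (A.submatrix id k).det * ∏ i, B (k i) i) C.det := by
  simp only [det_apply', sum_mul, submatrix_apply, id_eq]
  refine hasSum_sum fun σ _ => ?_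
  have hprod := hasSum_prod_pi (fun i => hC (σ i) i) fun i => hC_norm (σ i) i
  refine (hprod.mul_left _).congr_fun fun k => ?_
  rw [prod_mul_distrib, mul_assoc]

theorem hasSum_det_submatrix_mul_det_submatrix {n : ℕ} {ι : Type*} [LinearOrder ι]
    {A : Matrix (Fin n) ι R} {B : Matrix ι (Fin n) R} {C : Matrix (Fin n) (Fin n) R}
    (hC : ∀ i j, HasSum (fun k => A i k * B k j) (C i j))
    (hC_norm : ∀ i j, Summable fun k => ‖A i k * B k j‖) :
    HasSum (fun k : {k : Fin n → ι // StrictAnti k} =>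
      (A.submatrix id k.1).det * (B.submatrix k.1 id).det) C.det := by
  have htuples := hasSum_det_submatrix_mul_prod hC hC_norm
  refine (hasSum_strictAnti_sum_perm htuples fun k hk => ?_).congr_fun fun k => ?_
  · rw [det_submatrix_eq_zero_of_not_injective A hk, zero_mul]
  · exact (sum_perm_det_submatrix_mul_prod A B k).symm

end CauchyBinet

section PowerSeries

variable {R : Type*} [NormedCommRing R] [CompleteSpace R] {n : ℕ} {a x : Fin n → R} {c : ℕ → R}
  {G : Matrix (Fin n) (Fin n) R}

theorem hasSum_det_powerSeries
    (hG : ∀ i j, HasSum (fun m => c m * (a j * x i) ^ m) (G i j))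
    (hG_norm : ∀ i j, Summable fun m => ‖c m * (a j * x i) ^ m‖) :
    HasSum (fun k : {k : Fin n → ℕ // StrictAnti k} =>
      (∏ l, c (k.1 l)) * (of fun i j => a i ^ k.1 j).det * (of fun i j => x i ^ k.1 j).det)
      G.det := by
  let A : Matrix (Fin n) ℕ R := of fun i m => c m * x i ^ m
  let B : Matrix ℕ (Fin n) R := of fun m j => a j ^ m
  have hAB (i j : Fin n) (m : ℕ) : c m * (a j * x i) ^ m = A i m * B m j := by
    simp only [A, B, of_apply]
    ring
  simp only [hAB] at hG hG_norm
  refine (hasSum_det_submatrix_mul_det_submatrix hG hG_norm).congr_fun fun k => ?_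
  have hA : (A.submatrix id k.1).det = (∏ l, c (k.1 l)) * (of fun i j => x i ^ k.1 j).det :=
    det_mul_row _ _
  have hB : (B.submatrix k.1 id).det = (of fun i j => a i ^ k.1 j).det :=
    det_transpose (of fun i j => a i ^ k.1 j)
  rw [hA, hB]
  ring

theorem hasSum_det_powerSeries_of_coeff_zero (hc : c 0 = 0)
    (hG : ∀ i j, HasSum (fun m => c m * (a j * x i) ^ m) (G i j))
    (hG_norm : ∀ i j, Summable fun m => ‖c m * (a j * x i) ^ m‖) :
    HasSum (fun k : {k : Fin n → ℕ // StrictAnti k ∧ ∀ l, 1 ≤ k l} =>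
      (∏ l, c (k.1 l)) * (of fun i j => a i ^ k.1 j).det * (of fun i j => x i ^ k.1 j).det)
      G.det := by
  let e := Subtype.impEmbedding (fun k : Fin n → ℕ => StrictAnti k ∧ ∀ l, 1 ≤ k l) StrictAnti
    fun _ hk => hk.1
  have hall := hasSum_det_powerSeries hG hG_norm
  rw [← e.injective.hasSum_iff] at hall
  · exact hall
  · intro k hk
    obtain ⟨l, hl⟩ : ∃ l, k.1 l = 0 := by
      by_contra! hpos
      exact hk ⟨⟨k.1, k.2, fun l => Nat.one_le_iff_ne_zero.2 (hpos l)⟩, rfl⟩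
    rw [prod_eq_zero (mem_univ l) (by rw [hl, hc]), zero_mul, zero_mul]

end PowerSeries

-- The term `m = 0` vanishes because `1 / 0 = 0`.
theorem hasSum_neg_one_div_mul_pow_log {y : ℝ} (hy : |y| < 1) :
    HasSum (fun m : ℕ => -(1 / (m : ℝ)) * y ^ m) (Real.log (1 - y)) := by
  rw [← hasSum_nat_add_iff' 1]
  simpa [div_eq_inv_mul] using (Real.hasSum_pow_div_log_of_abs_lt_one hy).neg

theorem cauchy_type_identity_log
    (n : ℕ) (hn : 1 ≤ n) (a x : Fin n → ℝ)
    (hax : ∀ i j : Fin n, |a j * x i| < 1) :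
    HasSum
      (fun k : {k : Fin n → ℕ // StrictAnti k ∧ ∀ l : Fin n, 1 ≤ k l} =>
        (-1 : ℝ) ^ n * (∏ l : Fin n, (1 / (k.1 l : ℝ))) *
          (Matrix.of fun i j : Fin n => (a i) ^ (k.1 j)).det *
          (Matrix.of fun i j : Fin n => (x i) ^ (k.1 j)).det)
      (Matrix.of fun i j : Fin n => Real.log (1 - a j * x i)).det := by
  have hlog (i j : Fin n) := hasSum_neg_one_div_mul_pow_log (hax i j)
  have hcoeff_zero : -(1 / ((0 : ℕ) : ℝ)) = 0 := by simp
  refine (hasSum_det_powerSeries_of_coeff_zero hcoeff_zero hlog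
    fun i j => (hlog i j).summable.norm).congr_fun fun k => ?_
  have hcoeff : ∏ l, -(1 / (k.1 l : ℝ)) = (-1) ^ n * ∏ l, (1 / (k.1 l : ℝ)) := by
    simp [prod_neg]
  rw [hcoeff]
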